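/- arXiv:2211.03938 — 2 statements merged into one kernel-verified Lean document; each statement's English description precedes it below -/
import Mathlib

section
/- Let F be a field and let H be a finite simple graph with vertex set {x_0, x_1, …, x_{n−1}}. Let P(x_0, …, x_{n−1}) = ∏_{x_i x_j ∈ E(H)} (x_i − x_j) be the graph polynomial of H (one factor per edge, with an arbitrary fixed choice of order of endpoints in each factor). Suppose t_0, …, t_{n−1} are nonnegative integers with t_0 + ⋯ + t_{n−1} = |E(H)| such that the coefficient of the monomial x_0^{t_0} x_1^{t_1} ⋯ x_{n−1}^{t_{n−1}} in P is nonzero. Then for any subsets C_0, …, C_{n−1} of F with |C_i| > t_i for each i, there exist elements c_0 ∈ C_0, …, c_{n−1} ∈ C_{n−1} such that c_i ≠ c_j for every edge x_i x_j ∈ E(H); in particular, choosing the color c_i for x_i yields a proper coloring of H in which each vertex x_i receives a color from C_i. -/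
/-!
The graph polynomial is a product of `|E|` linear forms, hence homogeneous of degree
`|E| = ∑ t i`, so the monomial `x^t` has top degree and a nonzero coefficient. Alon's
Combinatorial Nullstellensatz (`MvPolynomial.combinatorial_nullstellensatz_exists_eval_nonzero`)
then gives a point of `∏ C i` at which the polynomial does not vanish; no factor
`c i - c j` vanishes there, which says that `c` is a proper coloring.
-/

/-- Combinatorial Nullstellensatz applied to the graph polynomial: if the coefficient of
`x_0^{t_0} ⋯ x_{n-1}^{t_{n-1}}` (with `∑ t i = |E|`) in `∏_{edges} (x_i - x_j)` is nonzero,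
then from any lists `C i` with `|C i| > t i` one can choose `c i ∈ C i` giving distinct
values to the endpoints of every edge, i.e. a proper coloring from the lists. -/
theorem graph_polynomial_nullstellensatz
    {F : Type*} [Field F] {n : ℕ}
    (E : Finset (Fin n × Fin n))
    (hloop : ∀ e ∈ E, e.1 ≠ e.2)
    (hsym : ∀ e ∈ E, (e.2, e.1) ∉ E)
    (t : Fin n → ℕ) (hsum : ∑ i, t i = E.card)
    (hcoeff :
      (∏ e ∈ E, (MvPolynomial.X e.1 - MvPolynomial.X e.2 : MvPolynomial (Fin n) F)).coeff
        (Finsupp.equivFunOnFinite.symm t) ≠ 0)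
    (C : Fin n → Finset F) (hC : ∀ i, t i < (C i).card) :
    ∃ c : Fin n → F, (∀ i, c i ∈ C i) ∧ ∀ e ∈ E, c e.1 ≠ c e.2 := by
  classical
  -- A product of `|E|` linear forms is homogeneous, so its total degree is `|E| = ∑ t i`.
  have hhom : (∏ e ∈ E, (MvPolynomial.X e.1 - MvPolynomial.X e.2 :
      MvPolynomial (Fin n) F)).IsHomogeneous (∑ _e ∈ E, 1) :=
    MvPolynomial.IsHomogeneous.prod E _ _ fun e _ =>
      (MvPolynomial.isHomogeneous_X F e.1).sub (MvPolynomial.isHomogeneous_X F e.2)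
  have hne : (∏ e ∈ E, (MvPolynomial.X e.1 - MvPolynomial.X e.2 :
      MvPolynomial (Fin n) F)) ≠ 0 := fun h => hcoeff (by rw [h, MvPolynomial.coeff_zero])
  obtain ⟨c, hc, hev⟩ := MvPolynomial.combinatorial_nullstellensatz_exists_eval_nonzero _
    (Finsupp.equivFunOnFinite.symm t) hcoeff
    (by rw [hhom.totalDegree hne, Finsupp.degree_eq_sum]; simp [hsum]) C (by simpa using hC)
  refine ⟨c, hc, fun e he heq => hev ?_⟩
  rw [map_prod]
  exact Finset.prod_eq_zero he (by simp [heq])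
end

section
/- Let H be the graph on five vertices x_0, x_1, x_2, x_3, x_4 with edge set {x_0x_1, x_0x_4, x_1x_2, x_1x_4, x_2x_3, x_3x_4}. Then for any finite sets of colors C_0, C_1, C_2, C_3, C_4 (subsets of an arbitrary field, e.g. ℝ) with |C_1| ≥ 3 and |C_i| ≥ 2 for each i ∈ {0, 2, 3, 4}, there exist colors c_0 ∈ C_0, c_1 ∈ C_1, c_2 ∈ C_2, c_3 ∈ C_3, c_4 ∈ C_4 such that c_i ≠ c_j whenever x_i x_j is an edge of H. In other words, H admits a proper coloring from any such lists; this establishes that the configuration S_1 is reducible. -/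
/-!
If some colour `a ∈ C4` is missing from `C0`, give it to `x₄` and colour `x₃, x₂, x₁, x₀` greedily in
this order: when `x₀` is reached, only the colour of `x₁` can be forbidden in its list. If some
`a ∈ C4` is missing from `C3`, colour `x₄` with it and proceed in the order `x₀, x₁, x₂, x₃`.
Otherwise `C4` is contained in both `C0` and `C3`. Take distinct `a, b ∈ C4`, colour `x₁` outside
`{a, b}`, colour `x₂` differently from `x₁`, and then give one of `a, b` to both `x₀` and `x₃`, and
the other to `x₄`, choosing the former different from the colour of `x₂`.
-/

theorem exists_mem_ne_of_two_le {F : Type*} {C : Finset F} (h : 2 ≤ C.card) (a : F) :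
    ∃ c ∈ C, c ≠ a :=
  Finset.exists_mem_ne (by omega) a

theorem exists_mem_ne_ne_of_three_le {F : Type*} {C : Finset F} (h : 3 ≤ C.card) (a b : F) :
    ∃ c ∈ C, c ≠ a ∧ c ≠ b := by
  classical
  obtain ⟨c, hc, hcab⟩ := Finset.exists_mem_notMem_of_card_lt_card
    (s := {a, b}) (t := C) (lt_of_le_of_lt Finset.card_le_two (by omega))
  simp only [Finset.mem_insert, Finset.mem_singleton, not_or] at hcab
  exact ⟨c, hc, hcab⟩

/-- The configuration `S_1` (triangle `x₀x₁x₄` sharing edge `x₁x₄` with the 4-cycle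
`x₁x₂x₃x₄`) is reducible: from any lists with `|C₁| ≥ 3` and `|Cᵢ| ≥ 2` otherwise,
one can properly color its five vertices. -/
theorem S1_reducible
    {F : Type*} [Field F]
    (C0 C1 C2 C3 C4 : Finset F)
    (h1 : 3 ≤ C1.card)
    (h0 : 2 ≤ C0.card) (h2 : 2 ≤ C2.card) (h3 : 2 ≤ C3.card) (h4 : 2 ≤ C4.card) :
    ∃ c0 ∈ C0, ∃ c1 ∈ C1, ∃ c2 ∈ C2, ∃ c3 ∈ C3, ∃ c4 ∈ C4,
      c0 ≠ c1 ∧ c0 ≠ c4 ∧ c1 ≠ c2 ∧ c1 ≠ c4 ∧ c2 ≠ c3 ∧ c3 ≠ c4 := by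
  by_cases h40 : C4 ⊆ C0
  · by_cases h43 : C4 ⊆ C3
    · obtain ⟨a, ha, b, hb, hab⟩ := Finset.one_lt_card.mp h4
      obtain ⟨c1, hc1, h1a, h1b⟩ := exists_mem_ne_ne_of_three_le h1 a b
      obtain ⟨c2, hc2, h21⟩ := exists_mem_ne_of_two_le h2 c1
      by_cases h2a : c2 = a
      · subst h2a
        exact ⟨b, h40 hb, c1, hc1, c2, hc2, b, h43 hb, c2, ha,
          h1b.symm, hab.symm, h21.symm, h1a, hab, hab.symm⟩
      · exact ⟨a, h40 ha, c1, hc1, c2, hc2, a, h43 ha, b, hb,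
          h1a.symm, hab, h21.symm, h1b, h2a, hab⟩
    · obtain ⟨a, ha, ha3⟩ := Finset.not_subset.mp h43
      obtain ⟨c0, hc0, h0a⟩ := exists_mem_ne_of_two_le h0 a
      obtain ⟨c1, hc1, h1a, h10⟩ := exists_mem_ne_ne_of_three_le h1 a c0
      obtain ⟨c2, hc2, h21⟩ := exists_mem_ne_of_two_le h2 c1
      obtain ⟨c3, hc3, h32⟩ := exists_mem_ne_of_two_le h3 c2
      exact ⟨c0, hc0, c1, hc1, c2, hc2, c3, hc3, a, ha,
        h10.symm, h0a, h21.symm, h1a, h32.symm, ne_of_mem_of_not_mem hc3 ha3⟩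
  · obtain ⟨a, ha, ha0⟩ := Finset.not_subset.mp h40
    obtain ⟨c3, hc3, h3a⟩ := exists_mem_ne_of_two_le h3 a
    obtain ⟨c2, hc2, h23⟩ := exists_mem_ne_of_two_le h2 c3
    obtain ⟨c1, hc1, h1a, h12⟩ := exists_mem_ne_ne_of_three_le h1 a c2
    obtain ⟨c0, hc0, h01⟩ := exists_mem_ne_of_two_le h0 c1
    exact ⟨c0, hc0, c1, hc1, c2, hc2, c3, hc3, a, ha,
      h01, ne_of_mem_of_not_mem hc0 ha0, h12, h1a, h23, h3a⟩
end
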